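/- Let n ≥ 1 and let k = 2n. Define the block-diagonal matrix H_e : Matrix (Fin n ⊕ Fin n) (Fin n ⊕ Fin n) ℝ (equivalently a k×k matrix) whose upper-left n×n block has entries 1/(2i + 2j + 1) (0-indexed), whose lower-right n×n block has entries -1/(2i + 2j + 3) (0-indexed), and whose off-diagonal blocks are zero. Then H_e is invertible and the sum of all entries of H_e⁻¹ equals -k. -/

import Mathlib

/-- The block-diagonal matrix `H_e` (for even `k = 2n`): upper-left `n×n` block with
entries `1/(2i+2j+1)` (0-indexed), lower-right `n×n` block with entries
`-1/(2i+2j+3)` (0-indexed), zero off-diagonal blocks. -/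
noncomputable def He (n : ℕ) : Matrix (Fin n ⊕ Fin n) (Fin n ⊕ Fin n) ℝ :=
  Matrix.fromBlocks
    (Matrix.of fun i j => 1 / (2 * ((i : ℕ) : ℝ) + 2 * ((j : ℕ) : ℝ) + 1)) 0 0
    (Matrix.of fun i j => -(1 / (2 * ((i : ℕ) : ℝ) + 2 * ((j : ℕ) : ℝ) + 3)))

lemma cauchy_isUnit_aux (n : ℕ) (x y : Fin n → ℝ) (hx : Function.Injective x)
    (hy : Function.Injective y) (h : ∀ i j, x i + y j ≠ 0) :
    IsUnit (Matrix.of fun i j => 1 / (x i + y j)) := by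
  rw [Matrix.isUnit_iff_isUnit_det, isUnit_iff_ne_zero]
  intro hdet
  obtain ⟨c, hc0, hc⟩ := Matrix.exists_mulVec_eq_zero_iff.mpr hdet
  apply hc0
  let P : Polynomial ℝ := ∑ j, Polynomial.C (c j) *
    ∏ l ∈ Finset.univ.erase j, (Polynomial.X + Polynomial.C (y l))
  have hev : ∀ t, P.eval t = ∑ j, c j * ∏ l ∈ Finset.univ.erase j, (t + y l) := by
    intro t
    simp [P, Polynomial.eval_finsetSum, Polynomial.eval_prod]
  have hP : P = 0 := by
    by_cases hn : n = 0
    · subst hn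
      simp [P]
    apply Polynomial.eq_zero_of_natDegree_lt_card_of_eval_eq_zero P hx
    · intro i
      rw [hev]
      have h1 := congrFun hc i
      simp only [Matrix.mulVec, dotProduct, Matrix.of_apply, Pi.zero_apply] at h1
      have h2 : ∀ j, c j * ∏ l ∈ Finset.univ.erase j, (x i + y l)
          = (∏ l, (x i + y l)) * (1 / (x i + y j) * c j) := by
        intro j
        rw [← Finset.mul_prod_erase Finset.univ (fun l => x i + y l) (Finset.mem_univ j)]
        have := h i j
        field_simp
      rw [Finset.sum_congr rfl fun j _ => h2 j, ← Finset.mul_sum, h1, mul_zero]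
    · rw [Fintype.card_fin]
      have : P.natDegree ≤ n - 1 := by
        apply Polynomial.natDegree_sum_le_of_forall_le
        intro j _
        refine (Polynomial.natDegree_C_mul_le _ _).trans ?_
        refine (Polynomial.natDegree_prod_le _ _).trans ?_
        simp [Finset.card_erase_of_mem]
      omega
  funext j
  have h3 := hev (-y j)
  rw [hP, Polynomial.eval_zero, Finset.sum_eq_single j] at h3
  · rcases mul_eq_zero.mp h3.symm with h4 | h4
    · exact h4
    · rw [Finset.prod_eq_zero_iff] at h4
      obtain ⟨l, hl, h5⟩ := h4
      exact absurd (hy (by linarith : y l = y j)) (Finset.ne_of_mem_erase hl)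
  · intro b _ hb
    rw [Finset.prod_eq_zero (i := j), mul_zero]
    · simp [hb.symm]
    · simp
  · simp

lemma cauchy_sum_aux (n : ℕ) (x y : Fin n → ℝ) (h : ∀ i j, x i + y j ≠ 0)
    (A : Matrix (Fin n) (Fin n) ℝ) (hA : A = Matrix.of fun i j => 1 / (x i + y j))
    (hu : IsUnit A) : ∑ i, ∑ j, A⁻¹ i j = ∑ i, x i + ∑ i, y i := by
  have hd : IsUnit A.det := (Matrix.isUnit_iff_isUnit_det _).mp hu
  have key : Matrix.diagonal x * A + A * Matrix.diagonal y = Matrix.of fun _ _ => (1 : ℝ) := by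
    ext i j
    have := h i j
    simp only [hA, Matrix.add_apply, Matrix.diagonal_mul, Matrix.mul_diagonal, Matrix.of_apply]
    field_simp
  have h1 := congrArg (fun M => (A⁻¹ * M).trace) key
  simp only [Matrix.mul_add, Matrix.trace_add] at h1
  rw [Matrix.trace_mul_comm, Matrix.mul_assoc, Matrix.mul_nonsing_inv _ hd, ← Matrix.mul_assoc,
    Matrix.nonsing_inv_mul _ hd, Matrix.mul_one, Matrix.one_mul, Matrix.trace_diagonal,
    Matrix.trace_diagonal] at h1
  rw [h1]
  simp [Matrix.trace, Matrix.mul_apply]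

lemma hilbert_aux (n : ℕ) (s : ℝ) (hs : 0 < s) (A : Matrix (Fin n) (Fin n) ℝ)
    (hA : A = Matrix.of fun i j : Fin n => 1 / (2 * ((i : ℕ) : ℝ) + 2 * ((j : ℕ) : ℝ) + s)) :
    IsUnit A ∧ ∑ i, ∑ j, A⁻¹ i j = 4 * ∑ i : Fin n, ((i : ℕ) : ℝ) + n * s := by
  have h : ∀ i j : Fin n, (2 * ((i : ℕ) : ℝ) + s) + 2 * ((j : ℕ) : ℝ) ≠ 0 := by
    intro i j
    positivity
  have hA' : A = Matrix.of fun i j : Fin n =>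
      1 / ((2 * ((i : ℕ) : ℝ) + s) + 2 * ((j : ℕ) : ℝ)) := by
    rw [hA]
    ext i j
    simp only [Matrix.of_apply]
    congr 1
    ring
  have hu : IsUnit A := by
    rw [hA']
    refine cauchy_isUnit_aux n (fun i => 2 * ((i : ℕ) : ℝ) + s) (fun j => 2 * ((j : ℕ) : ℝ))
      ?_ ?_ h
    · intro a b hab
      have : ((a : ℕ) : ℝ) = ((b : ℕ) : ℝ) := by
        simp only at hab
        linarith
      exact Fin.ext (by exact_mod_cast this)
    · intro a b hab
      have : ((a : ℕ) : ℝ) = ((b : ℕ) : ℝ) := by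
        simp only at hab
        linarith
      exact Fin.ext (by exact_mod_cast this)
  refine ⟨hu, ?_⟩
  rw [cauchy_sum_aux n _ _ h A hA' hu, Finset.sum_add_distrib, ← Finset.mul_sum]
  simp
  ring

/-- `H_e` is invertible and the sum of all entries of its inverse equals `-k`,
where `k = 2n`. -/
theorem He_inverse_entry_sum (n : ℕ) (hn : 1 ≤ n) :
    IsUnit (He n) ∧ ∑ i, ∑ j, (He n)⁻¹ i j = -((2 * n : ℕ) : ℝ) := by
  obtain ⟨u1, s1⟩ := hilbert_aux n 1 one_pos _ rfl
  obtain ⟨u2, s2⟩ := hilbert_aux n 3 three_pos _ rfl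
  have e : He n = Matrix.fromBlocks
      (Matrix.of fun i j : Fin n => 1 / (2 * ((i : ℕ) : ℝ) + 2 * ((j : ℕ) : ℝ) + 1)) 0 0
      (-(Matrix.of fun i j : Fin n => 1 / (2 * ((i : ℕ) : ℝ) + 2 * ((j : ℕ) : ℝ) + 3))) := rfl
  rw [e]
  generalize (Matrix.of fun i j : Fin n =>
    1 / (2 * ((i : ℕ) : ℝ) + 2 * ((j : ℕ) : ℝ) + 1)) = A at *
  generalize (Matrix.of fun i j : Fin n =>
    1 / (2 * ((i : ℕ) : ℝ) + 2 * ((j : ℕ) : ℝ) + 3)) = B at *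
  have hB : (-B)⁻¹ = -B⁻¹ := by
    apply Matrix.inv_eq_left_inv
    rw [neg_mul_neg, Matrix.nonsing_inv_mul _ ((Matrix.isUnit_iff_isUnit_det _).mp u2)]
  refine ⟨Matrix.isUnit_fromBlocks_zero₂₁.mpr ⟨u1, u2.neg⟩, ?_⟩
  rw [Matrix.inv_fromBlocks_zero₂₁_of_isUnit_iff _ _ _ (iff_of_true u1 u2.neg), hB]
  simp only [Fintype.sum_sum_type, Matrix.fromBlocks_apply₁₁, Matrix.fromBlocks_apply₁₂,
    Matrix.fromBlocks_apply₂₁, Matrix.fromBlocks_apply₂₂, Matrix.mul_zero, Matrix.zero_mul,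
    neg_zero, Matrix.zero_apply, Finset.sum_const_zero, add_zero, zero_add, Matrix.neg_apply,
    Finset.sum_neg_distrib, s1, s2]
  push_cast
  ring
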